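/- arXiv:1810.05545 — 3 statements merged into one kernel-verified Lean document; each statement's English description precedes it below -/
import Mathlib

section
/- Let A = (L_1,L_2,L_3,L_4) and A' = (L'_1,L'_2,L'_3,L'_4) encode (4,1) valise adinkras with chiralities χ and χ' respectively. Then for every partition {I,J} ∪ {K,L} = {1,2,3,4} with I < J and K < L, one has (L_Iᵀ·L_J)·(L'_Iᵀ·L'_J) = χ·χ'·(L_Kᵀ·L_L)·(L'_Kᵀ·L'_L). -/
open Matrix

/-- A signed permutation matrix: exactly one nonzero entry in each row and column,
that entry being `1` or `-1`. -/
def IsSignedPerm {n : ℕ} (M : Matrix (Fin n) (Fin n) ℤ) : Prop :=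
  (∀ i j, M i j = 0 ∨ M i j = 1 ∨ M i j = -1) ∧
  (∀ i, ∃! j, M i j ≠ 0) ∧
  (∀ j, ∃! i, M i j ≠ 0)

/-- The garden algebra relations for a family of `d × d` integer matrices. -/
def GardenRel {d N : ℕ} (L : Fin N → Matrix (Fin d) (Fin d) ℤ) : Prop :=
  ∀ I J : Fin N,
    (L I * (L J)ᵀ + L J * (L I)ᵀ =
      if I = J then (2 : ℤ) • (1 : Matrix (Fin d) (Fin d) ℤ) else 0) ∧
    ((L I)ᵀ * L J + (L J)ᵀ * L I =
      if I = J then (2 : ℤ) • (1 : Matrix (Fin d) (Fin d) ℤ) else 0)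

/-- The L-matrices of a (4,1) valise adinkra: a quadruple of 4×4 integer signed
permutation matrices satisfying the garden algebra relations. -/
def IsAdinkra (L : Fin 4 → Matrix (Fin 4) (Fin 4) ℤ) : Prop :=
  (∀ I, IsSignedPerm (L I)) ∧ GardenRel L

namespace GardenRel

variable {d N : ℕ} {L : Fin N → Matrix (Fin d) (Fin d) ℤ}

theorem mul_transpose_self (h : GardenRel L) (I : Fin N) : L I * (L I)ᵀ = 1 := by
  have h2 := (h I I).1
  rw [if_pos rfl, ← two_smul ℤ] at h2
  exact smul_right_injective _ (two_ne_zero : (2 : ℤ) ≠ 0) h2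

theorem transpose_mul_self (h : GardenRel L) (I : Fin N) : (L I)ᵀ * L I = 1 :=
  mul_eq_one_comm.mp (h.mul_transpose_self I)

theorem mul_transpose_anticomm (h : GardenRel L) {I J : Fin N} (hIJ : I ≠ J) :
    L I * (L J)ᵀ = -(L J * (L I)ᵀ) := by
  have h2 := (h I J).1
  rw [if_neg hIJ] at h2
  exact eq_neg_of_add_eq_zero_left h2

theorem transpose_mul_anticomm (h : GardenRel L) {I J : Fin N} (hIJ : I ≠ J) :
    (L I)ᵀ * L J = -((L J)ᵀ * L I) := by
  have h2 := (h I J).2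
  rw [if_neg hIJ] at h2
  exact eq_neg_of_add_eq_zero_left h2

/-- Exchanging the two middle matrices of a product of four changes its sign. -/
theorem swap_middle (h : GardenRel L) {I J K M : Fin N} (hJK : J ≠ K) :
    (L I)ᵀ * L J * ((L K)ᵀ * L M) = -((L I)ᵀ * L K * ((L J)ᵀ * L M)) := by
  calc (L I)ᵀ * L J * ((L K)ᵀ * L M) = (L I)ᵀ * (L J * (L K)ᵀ) * L M := by
        simp only [Matrix.mul_assoc]
    _ = -((L I)ᵀ * L K * ((L J)ᵀ * L M)) := by
        rw [h.mul_transpose_anticomm hJK]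
        simp only [Matrix.mul_neg, Matrix.neg_mul, Matrix.mul_assoc]

/-- The square of `(L K)ᵀ * L M` is `-1`, so a left factor of a scalar product is determined. -/
theorem eq_smul_of_mul_eq_neg_smul_one (h : GardenRel L) {K M : Fin N} (hKM : K ≠ M)
    {A : Matrix (Fin d) (Fin d) ℤ} {c : ℤ} (hA : A * ((L K)ᵀ * L M) = -(c • 1)) :
    A = c • ((L K)ᵀ * L M) := by
  have hinv : (L K)ᵀ * L M * ((L M)ᵀ * L K) = 1 := by
    rw [Matrix.mul_assoc, ← Matrix.mul_assoc (L M), h.mul_transpose_self, Matrix.one_mul,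
      h.transpose_mul_self]
  calc A = A * ((L K)ᵀ * L M) * ((L M)ᵀ * L K) := by
        rw [Matrix.mul_assoc, hinv, Matrix.mul_one]
    _ = c • ((L K)ᵀ * L M) := by
        rw [hA, h.transpose_mul_anticomm hKM.symm]
        simp

end GardenRel

/-- The chirality relates the products over complementary pairs of indices. -/
theorem GardenRel.transpose_mul_eq_chirality_smul {d : ℕ}
    {L : Fin 4 → Matrix (Fin d) (Fin d) ℤ} (h : GardenRel L) {χ : ℤ}
    (hχ : (L 0)ᵀ * L 1 * (L 2)ᵀ * L 3 = -(χ • (1 : Matrix (Fin d) (Fin d) ℤ))) :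
    (L 0)ᵀ * L 1 = χ • ((L 2)ᵀ * L 3) ∧
    (L 0)ᵀ * L 2 = (-χ) • ((L 1)ᵀ * L 3) ∧
    (L 0)ᵀ * L 3 = χ • ((L 1)ᵀ * L 2) := by
  rw [Matrix.mul_assoc] at hχ
  refine ⟨h.eq_smul_of_mul_eq_neg_smul_one (by decide) hχ,
    h.eq_smul_of_mul_eq_neg_smul_one (by decide) ?_,
    h.eq_smul_of_mul_eq_neg_smul_one (by decide) ?_⟩
  · rw [h.swap_middle (by decide), hχ, neg_smul]
  · rw [h.swap_middle (by decide), h.transpose_mul_anticomm (I := 3) (J := 2) (by decide),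
      Matrix.mul_neg, neg_neg, hχ]

theorem complementary_pairs_fin_four : ∀ I J K M : Fin 4, I < J → K < M →
    ({I, J, K, M} : Finset (Fin 4)) = Finset.univ →
    (I, J, K, M) ∈ ({(0, 1, 2, 3), (0, 2, 1, 3), (0, 3, 1, 2),
      (2, 3, 0, 1), (1, 3, 0, 2), (1, 2, 0, 3)} : Finset (Fin 4 × Fin 4 × Fin 4 × Fin 4)) := by
  decide

theorem stmt11 (L L' : Fin 4 → Matrix (Fin 4) (Fin 4) ℤ)
    (hL : IsAdinkra L) (hL' : IsAdinkra L')
    (χ χ' : ℤ) (hχ : χ = 1 ∨ χ = -1) (hχ' : χ' = 1 ∨ χ' = -1)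
    (hchir : (L 0)ᵀ * L 1 * (L 2)ᵀ * L 3 = -(χ • (1 : Matrix (Fin 4) (Fin 4) ℤ)))
    (hchir' : (L' 0)ᵀ * L' 1 * (L' 2)ᵀ * L' 3 = -(χ' • (1 : Matrix (Fin 4) (Fin 4) ℤ))) :
    ∀ I J K M : Fin 4, I < J → K < M →
      ({I, J, K, M} : Finset (Fin 4)) = Finset.univ →
      ((L I)ᵀ * L J) * ((L' I)ᵀ * L' J) =
        (χ * χ') • (((L K)ᵀ * L M) * ((L' K)ᵀ * L' M)) := by
  intro I J K M hIJ hKM hU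
  obtain ⟨h01, h02, h03⟩ := hL.2.transpose_mul_eq_chirality_smul hchir
  obtain ⟨h01', h02', h03'⟩ := hL'.2.transpose_mul_eq_chirality_smul hchir'
  have hsq : χ * χ' * (χ * χ') = 1 := by
    rcases hχ with rfl | rfl <;> rcases hχ' with rfl | rfl <;> rfl
  have hmem := complementary_pairs_fin_four I J K M hIJ hKM hU
  simp only [Finset.mem_insert, Finset.mem_singleton, Prod.mk.injEq] at hmem
  rcases hmem with ⟨rfl, rfl, rfl, rfl⟩ | ⟨rfl, rfl, rfl, rfl⟩ | ⟨rfl, rfl, rfl, rfl⟩ |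
    ⟨rfl, rfl, rfl, rfl⟩ | ⟨rfl, rfl, rfl, rfl⟩ | ⟨rfl, rfl, rfl, rfl⟩ <;>
  simp only [h01, h02, h03, h01', h02', h03', Matrix.smul_mul, Matrix.mul_smul, smul_smul,
    mul_neg, neg_mul, neg_neg, hsq, one_smul, mul_comm χ' χ]
end

section
/- Let S be the set of all quadruples (L_1,L_2,L_3,L_4) of 4×4 integer signed permutation matrices satisfying the garden algebra relations, and for A, A' ∈ S let g(A,A') := Σ_{I≠J} trace(L_Iᵀ·L_J·L'_Iᵀ·L'_J) (sum over ordered pairs of distinct I,J ∈ {1,2,3,4}). Then among the ordered pairs (A,A') ∈ S × S: exactly 14155776 pairs satisfy g(A,A') = −48 (gadget value 1); exactly 84934656 pairs satisfy g(A,A') = −16 (gadget value 1/3); exactly 127401984 pairs satisfy g(A,A') = 16 (gadget value −1/3); and exactly 1132462080 pairs satisfy g(A,A') = 0 (gadget value 0). -/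
open Matrix

/-- `Σ_{I≠J} trace(L_Iᵀ·L_J·L'_Iᵀ·L'_J)`, summed over ordered pairs of distinct
`I, J ∈ {1,2,3,4}`; the gadget is `OG(A,A') = -(1/48)` times this quantity. -/
def gadgetSum (L L' : Fin 4 → Matrix (Fin 4) (Fin 4) ℤ) : ℤ :=
  ∑ I : Fin 4, ∑ J : Fin 4,
    if I ≠ J then Matrix.trace ((L I)ᵀ * L J * (L' I)ᵀ * L' J) else 0

/-- The set of (4,1) valise adinkras, encoded by their L-matrices. -/
def Adinkra41 : Type :=
  {L : Fin 4 → Matrix (Fin 4) (Fin 4) ℤ // IsAdinkra L}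

open Equiv

/-- The signed permutation matrix with entry `s i` at position `(i, σ i)`. -/
def signedPerm {n : ℕ} (σ : Perm (Fin n)) (s : Fin n → ℤˣ) : Matrix (Fin n) (Fin n) ℤ :=
  Matrix.of fun i j => if σ i = j then (s i : ℤ) else 0

theorem isSignedPerm_signedPerm {n : ℕ} (σ : Perm (Fin n)) (s : Fin n → ℤˣ) :
    IsSignedPerm (signedPerm σ s) := by
  refine ⟨fun i j => ?_, fun i => ⟨σ i, by simp [signedPerm], fun j hj => ?_⟩,
    fun j => ⟨σ.symm j, by simp [signedPerm], fun i hi => ?_⟩⟩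
  · by_cases h : σ i = j
    · rcases Int.units_eq_one_or (s i) with hs | hs <;> simp [signedPerm, h, hs]
    · simp [signedPerm, h]
  · by_contra h
    exact hj (by simp [signedPerm, Ne.symm h])
  · by_contra h
    exact hi (by simp [signedPerm, ← Equiv.eq_symm_apply, h])

theorem IsSignedPerm.exists_eq_signedPerm {n : ℕ} {M : Matrix (Fin n) (Fin n) ℤ}
    (hM : IsSignedPerm M) : ∃ σ s, M = signedPerm σ s := by
  obtain ⟨hent, hrow, hcol⟩ := hM
  choose f hf hf' using hrow
  have hinj : Function.Injective f := fun i i' h =>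
    (hcol (f i)).unique (hf i) (by simpa only [h] using hf i')
  have hs : ∀ i, ∃ u : ℤˣ, (u : ℤ) = M i (f i) := fun i => by
    rcases hent i (f i) with h | h | h
    · exact absurd h (hf i)
    · exact ⟨1, by simp [h]⟩
    · exact ⟨-1, by simp [h]⟩
  choose s hs using hs
  refine ⟨Equiv.ofBijective f (Finite.injective_iff_bijective.mp hinj), s, ?_⟩
  ext i j
  by_cases h : f i = j
  · subst h
    simp [signedPerm, hs]
  · have : M i j = 0 := by
      by_contra h'
      exact h (hf' i j h').symm
    simp [signedPerm, h, this]

theorem signedPerm_injective {n : ℕ} :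
    Function.Injective fun p : Perm (Fin n) × (Fin n → ℤˣ) => signedPerm p.1 p.2 := by
  rintro ⟨σ, s⟩ ⟨τ, t⟩ h
  have h1 : ∀ i j, signedPerm σ s i j = signedPerm τ t i j := fun i j => congrFun (congrFun h i) j
  have hσ : ∀ i, σ i = τ i := fun i => by
    by_contra hne
    have := h1 i (σ i)
    simp [signedPerm, Ne.symm hne] at this
  have hs : ∀ i, s i = t i := fun i => by
    have := h1 i (σ i)
    simpa [signedPerm, hσ i, Units.ext_iff] using this
  exact Prod.ext (Equiv.ext hσ) (funext hs)

theorem signedPerm_transpose {n : ℕ} (σ : Perm (Fin n)) (s : Fin n → ℤˣ) :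
    (signedPerm σ s)ᵀ = signedPerm σ.symm (s ∘ σ.symm) := by
  ext i j
  by_cases h : σ j = i
  · subst h
    simp [signedPerm]
  · have h' : σ.symm i ≠ j := fun h' => h (by simp [← h'])
    simp [signedPerm, h, h']

theorem signedPerm_mul {n : ℕ} (σ τ : Perm (Fin n)) (s t : Fin n → ℤˣ) :
    signedPerm σ s * signedPerm τ t = signedPerm (σ.trans τ) (fun i => s i * t (σ i)) := by
  ext i j
  simp only [signedPerm, Matrix.mul_apply, Matrix.of_apply, ite_mul, zero_mul,
    Finset.sum_ite_eq, Finset.mem_univ, if_true]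
  by_cases h : τ (σ i) = j <;> simp [h]

theorem signedPerm_transpose_mul_self {n : ℕ} (σ : Perm (Fin n)) (s : Fin n → ℤˣ) :
    (signedPerm σ s)ᵀ * signedPerm σ s = 1 := by
  rw [signedPerm_transpose, signedPerm_mul]
  ext i j
  simp [signedPerm, Matrix.one_apply]

theorem IsSignedPerm.mul {n : ℕ} {M N : Matrix (Fin n) (Fin n) ℤ} (hM : IsSignedPerm M)
    (hN : IsSignedPerm N) : IsSignedPerm (M * N) := by
  obtain ⟨σ, s, rfl⟩ := hM.exists_eq_signedPerm
  obtain ⟨τ, t, rfl⟩ := hN.exists_eq_signedPerm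
  rw [signedPerm_mul]
  exact isSignedPerm_signedPerm _ _

theorem IsSignedPerm.transpose {n : ℕ} {M : Matrix (Fin n) (Fin n) ℤ} (hM : IsSignedPerm M) :
    IsSignedPerm Mᵀ := by
  obtain ⟨σ, s, rfl⟩ := hM.exists_eq_signedPerm
  rw [signedPerm_transpose]
  exact isSignedPerm_signedPerm _ _

theorem IsSignedPerm.transpose_mul_self {n : ℕ} {M : Matrix (Fin n) (Fin n) ℤ}
    (hM : IsSignedPerm M) : Mᵀ * M = 1 := by
  obtain ⟨σ, s, rfl⟩ := hM.exists_eq_signedPerm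
  exact signedPerm_transpose_mul_self σ s

theorem IsSignedPerm.mul_transpose_self {n : ℕ} {M : Matrix (Fin n) (Fin n) ℤ}
    (hM : IsSignedPerm M) : M * Mᵀ = 1 :=
  mul_eq_one_comm.mp hM.transpose_mul_self

theorem transpose_mul_mul_mul {n : ℕ} {P : Matrix (Fin n) (Fin n) ℤ} (hP : Pᵀ * P = 1)
    (A B : Matrix (Fin n) (Fin n) ℤ) : (P * A)ᵀ * (P * B) = Aᵀ * B := by
  rw [Matrix.transpose_mul, Matrix.mul_assoc, ← Matrix.mul_assoc Pᵀ, hP, Matrix.one_mul]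

theorem GardenRel.mul_left {d N : ℕ} {L : Fin N → Matrix (Fin d) (Fin d) ℤ} (hL : GardenRel L)
    {P : Matrix (Fin d) (Fin d) ℤ} (hP : Pᵀ * P = 1) : GardenRel fun I => P * L I := by
  have hP' : P * Pᵀ = 1 := mul_eq_one_comm.mp hP
  intro I J
  constructor
  · have h : P * L I * (P * L J)ᵀ + P * L J * (P * L I)ᵀ
        = P * (L I * (L J)ᵀ + L J * (L I)ᵀ) * Pᵀ := by
      simp only [Matrix.transpose_mul]
      noncomm_ring
    rw [h, (hL I J).1]
    split_ifs
    · rw [Matrix.mul_smul, Matrix.smul_mul, Matrix.mul_one, hP']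
    · rw [Matrix.mul_zero, Matrix.zero_mul]
  · rw [transpose_mul_mul_mul hP, transpose_mul_mul_mul hP, (hL I J).2]

theorem IsAdinkra.mul_left {L : Fin 4 → Matrix (Fin 4) (Fin 4) ℤ} (hL : IsAdinkra L)
    {P : Matrix (Fin 4) (Fin 4) ℤ} (hP : IsSignedPerm P) : IsAdinkra fun I => P * L I :=
  ⟨fun I => hP.mul (hL.1 I), hL.2.mul_left hP.transpose_mul_self⟩

theorem gadgetSum_mul_left {P P' : Matrix (Fin 4) (Fin 4) ℤ} (hP : Pᵀ * P = 1)
    (hP' : P'ᵀ * P' = 1) (L L' : Fin 4 → Matrix (Fin 4) (Fin 4) ℤ) :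
    gadgetSum (fun I => P * L I) (fun I => P' * L' I) = gadgetSum L L' := by
  simp only [gadgetSum, transpose_mul_mul_mul hP,
    transpose_mul_mul_mul hP', Matrix.mul_assoc ((L _)ᵀ * L _)]

/-- The matrices of left multiplication (`ε = 1`) and negated right multiplication (`ε = -1`) by
the quaternion units `i`, `j`, `k` in the basis `1, i, j, k`. -/
def quatUnit (ε : ℤˣ) (k : Fin 3) : Matrix (Fin 4) (Fin 4) ℤ :=
  ![!![0, -(ε : ℤ), 0, 0; (ε : ℤ), 0, 0, 0; 0, 0, 0, -1; 0, 0, 1, 0],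
    !![0, 0, -(ε : ℤ), 0; 0, 0, 0, 1; (ε : ℤ), 0, 0, 0; 0, -1, 0, 0],
    !![0, 0, 0, -(ε : ℤ); 0, 0, -1, 0; 0, 1, 0, 0; (ε : ℤ), 0, 0, 0]] k

theorem isSignedPerm_smul_quatUnit : ∀ (u ε : ℤˣ) (k : Fin 3),
    IsSignedPerm ((u : ℤ) • quatUnit ε k) := by
  unfold IsSignedPerm ExistsUnique
  decide +kernel

theorem quatUnit_transpose : ∀ (ε : ℤˣ) (k : Fin 3), (quatUnit ε k)ᵀ = -quatUnit ε k := by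
  decide +kernel

theorem quatUnit_mul_add_mul : ∀ (ε : ℤˣ) (k l : Fin 3),
    quatUnit ε k * quatUnit ε l + quatUnit ε l * quatUnit ε k =
      if k = l then (-2 : ℤ) • 1 else 0 := by
  decide +kernel

theorem eq_and_ne_of_quatUnit_anticomm : ∀ (u v ε δ : ℤˣ) (k l : Fin 3),
    ((u : ℤ) • quatUnit ε k)ᵀ * ((v : ℤ) • quatUnit δ l) +
      ((v : ℤ) • quatUnit δ l)ᵀ * ((u : ℤ) • quatUnit ε k) = 0 → ε = δ ∧ k ≠ l := by
  decide +kernel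

theorem smul_quatUnit_injective : ∀ (u v ε δ : ℤˣ) (k l : Fin 3),
    (u : ℤ) • quatUnit ε k = (v : ℤ) • quatUnit δ l → u = v ∧ ε = δ ∧ k = l := by
  decide +kernel

theorem trace_quatUnit_mul : ∀ (ε δ : ℤˣ) (k l : Fin 3),
    trace (quatUnit ε k * quatUnit δ l) = if ε = δ ∧ k = l then -4 else 0 := by
  decide +kernel

theorem quatUnit_perm_mul : ∀ (ε : ℤˣ) (σ : Perm (Fin 3)) (i j : Fin 3), i ≠ j →
    quatUnit ε (σ i) * quatUnit ε (σ j) =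
      ((Perm.sign σ : ℤ) * if j = i + 1 then 1 else -1) • quatUnit ε (σ (-(i + j))) := by
  decide +kernel

theorem signedPerm_eq_quatUnit_of_antisymm : ∀ (σ : Perm (Fin 4)) (s : Fin 4 → ℤˣ),
    (signedPerm σ s)ᵀ = -signedPerm σ s →
      ∃ u ε k, signedPerm σ s = ((u : ℤˣ) : ℤ) • quatUnit ε k := by
  decide +kernel

/-- Labels for the quadruples `(1, M₁, M₂, M₃)` satisfying the garden algebra relations: a
chirality, and a signed permutation of the three quaternion units. -/
abbrev QuatFrame : Type := ℤˣ × Perm (Fin 3) × (Fin 3 → ℤˣ)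

/-- The signed quaternion units selected by a frame label. -/
def QuatFrame.unit (t : QuatFrame) (i : Fin 3) : Matrix (Fin 4) (Fin 4) ℤ :=
  (t.2.2 i : ℤ) • quatUnit t.1 (t.2.1 i)

/-- The quadruple of L-matrices `(1, M₁, M₂, M₃)` of a frame label. -/
def QuatFrame.toQuadruple (t : QuatFrame) : Fin 4 → Matrix (Fin 4) (Fin 4) ℤ :=
  Fin.cons 1 t.unit

theorem QuatFrame.unit_transpose (t : QuatFrame) (i : Fin 3) : (t.unit i)ᵀ = -t.unit i := by
  rw [QuatFrame.unit, Matrix.transpose_smul, quatUnit_transpose, smul_neg]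

theorem Int.coe_unit_mul_self (u : ℤˣ) : (u : ℤ) * u = 1 := by
  rcases Int.units_eq_one_or u with rfl | rfl <;> rfl

theorem QuatFrame.unit_mul_add_mul (t : QuatFrame) (i j : Fin 3) :
    t.unit i * t.unit j + t.unit j * t.unit i = if i = j then (-2 : ℤ) • 1 else 0 := by
  have h : t.unit i * t.unit j + t.unit j * t.unit i = ((t.2.2 i : ℤ) * t.2.2 j) •
      (quatUnit t.1 (t.2.1 i) * quatUnit t.1 (t.2.1 j) +
        quatUnit t.1 (t.2.1 j) * quatUnit t.1 (t.2.1 i)) := by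
    simp only [QuatFrame.unit, Matrix.smul_mul, Matrix.mul_smul, smul_smul, smul_add]
    rw [mul_comm (t.2.2 j : ℤ)]
  rw [h, quatUnit_mul_add_mul]
  by_cases hij : i = j
  · subst hij
    simp
  · simp [hij]

theorem QuatFrame.isAdinkra_toQuadruple (t : QuatFrame) : IsAdinkra t.toQuadruple := by
  refine ⟨fun I => ?_, fun I J => ?_⟩
  · refine Fin.cases ?_ (fun i => ?_) I
    · have h : (1 : Matrix (Fin 4) (Fin 4) ℤ) = signedPerm 1 1 := by
        ext i j
        by_cases h : i = j <;> simp [signedPerm, Matrix.one_apply, h]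
      rw [QuatFrame.toQuadruple, Fin.cons_zero, h]
      exact isSignedPerm_signedPerm _ _
    · exact isSignedPerm_smul_quatUnit _ _ _
  · have key (i j : Fin 3) :
        -(t.unit i * t.unit j) + -(t.unit j * t.unit i) = if i = j then (2 : ℤ) • 1 else 0 := by
      rw [← neg_add, t.unit_mul_add_mul]
      split_ifs <;> simp
    refine Fin.cases ?_ (fun i => ?_) I <;> refine Fin.cases ?_ (fun j => ?_) J
    · simp [QuatFrame.toQuadruple, two_smul]
    · simp [QuatFrame.toQuadruple, QuatFrame.unit_transpose, (Fin.succ_ne_zero j).symm]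
    · simp [QuatFrame.toQuadruple, QuatFrame.unit_transpose]
    · simpa only [QuatFrame.toQuadruple, Fin.cons_succ, QuatFrame.unit_transpose, Matrix.mul_neg,
        Matrix.neg_mul, Fin.succ_inj, and_self] using key i j

theorem QuatFrame.unit_injective : Function.Injective QuatFrame.unit := by
  rintro ⟨ε, σ, s⟩ ⟨δ, τ, t⟩ h
  have h' (i : Fin 3) := smul_quatUnit_injective _ _ _ _ _ _ (congrFun h i)
  exact Prod.ext (h' 0).2.1 (Prod.ext (Equiv.ext fun i => (h' i).2.2) (funext fun i => (h' i).1))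

/-- A normalized quadruple satisfying the garden relations comes from a frame label. -/
theorem IsAdinkra.exists_eq_toQuadruple {L : Fin 4 → Matrix (Fin 4) (Fin 4) ℤ}
    (hL : IsAdinkra L) (h0 : L 0 = 1) : ∃ t : QuatFrame, L = t.toQuadruple := by
  have hunit (i : Fin 3) :
      ∃ u ε k, L i.succ = ((u : ℤˣ) : ℤ) • quatUnit ε k := by
    obtain ⟨σ, s, hσ⟩ := (hL.1 i.succ).exists_eq_signedPerm
    have hanti : L i.succ + (L i.succ)ᵀ = 0 := by
      simpa [h0, (Fin.succ_ne_zero i).symm] using (hL.2 0 i.succ).2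
    rw [hσ] at hanti ⊢
    exact signedPerm_eq_quatUnit_of_antisymm σ s (eq_neg_of_add_eq_zero_right hanti)
  choose s ε k hunit using hunit
  have hpair (i j : Fin 3) (hij : i ≠ j) : ε i = ε j ∧ k i ≠ k j := by
    have h := (hL.2 i.succ j.succ).2
    rw [hunit, hunit, if_neg (by simpa using hij)] at h
    exact eq_and_ne_of_quatUnit_anticomm _ _ _ _ _ _ h
  have hk : Function.Injective k := fun i j h => by
    by_contra hij
    exact (hpair i j hij).2 h
  have hε (i : Fin 3) : ε i = ε 0 := by
    by_cases hi : i = 0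
    · rw [hi]
    · exact (hpair i 0 hi).1
  refine ⟨(ε 0, Equiv.ofBijective k (Finite.injective_iff_bijective.mp hk), s), funext fun I => ?_⟩
  refine Fin.cases ?_ (fun i => ?_) I
  · exact h0
  · simp [QuatFrame.toQuadruple, QuatFrame.unit, hunit, hε i]

/-- The adinkra with first matrix a given signed permutation and a given frame label. -/
def adinkraOfFrame (p : (Perm (Fin 4) × (Fin 4 → ℤˣ)) × QuatFrame) : Adinkra41 :=
  ⟨fun I => signedPerm p.1.1 p.1.2 * p.2.toQuadruple I,
    p.2.isAdinkra_toQuadruple.mul_left (isSignedPerm_signedPerm _ _)⟩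

theorem adinkraOfFrame_bijective : Function.Bijective adinkraOfFrame := by
  constructor
  · rintro ⟨⟨σ, s⟩, t⟩ ⟨⟨σ', s'⟩, t'⟩ h
    have h' (I : Fin 4) : signedPerm σ s * t.toQuadruple I = signedPerm σ' s' * t'.toQuadruple I :=
      congrFun (congrArg Subtype.val h) I
    have hP : (σ, s) = (σ', s') :=
      signedPerm_injective (by simpa [QuatFrame.toQuadruple] using h' 0)
    obtain ⟨rfl, rfl⟩ := Prod.mk.inj hP
    have hunit : t.unit = t'.unit := funext fun i => by
      have := congrArg ((signedPerm σ s)ᵀ * ·) (h' i.succ)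
      simpa [← Matrix.mul_assoc, signedPerm_transpose_mul_self, QuatFrame.toQuadruple] using this
    rw [QuatFrame.unit_injective hunit]
  · rintro ⟨L, hL⟩
    obtain ⟨t, ht⟩ := (hL.mul_left (hL.1 0).transpose).exists_eq_toQuadruple
      (hL.1 0).transpose_mul_self
    obtain ⟨σ, s, hσ⟩ := (hL.1 0).exists_eq_signedPerm
    refine ⟨((σ, s), t), Subtype.ext (funext fun I => ?_)⟩
    simp only [adinkraOfFrame]
    rw [← ht, ← hσ, ← Matrix.mul_assoc, (hL.1 0).mul_transpose_self, Matrix.one_mul]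

theorem gadgetSum_cons_one {M M' : Fin 3 → Matrix (Fin 4) (Fin 4) ℤ}
    (hM : ∀ i, (M i)ᵀ = -M i) (hM' : ∀ i, (M' i)ᵀ = -M' i) :
    gadgetSum (Fin.cons 1 M) (Fin.cons 1 M') =
      2 * ∑ i, trace (M i * M' i) +
        ∑ i, ∑ j, if i ≠ j then trace ((M i * M j) * (M' i * M' j)) else 0 := by
  simp only [gadgetSum, Fin.sum_univ_succ (n := 3), Fin.cons_zero, Fin.cons_succ, hM, hM',
    Finset.sum_add_distrib, ne_eq, Fin.succ_inj, Fin.succ_ne_zero, (Fin.succ_ne_zero _).symm,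
    not_true_eq_false, not_false_eq_true, if_true, if_false, Matrix.transpose_one, Matrix.mul_one,
    Matrix.one_mul, Matrix.neg_mul, Matrix.mul_neg, neg_neg, Matrix.mul_assoc]
  ring

/-- The value of `gadgetSum` as a function of the quotient of two frame labels. -/
def QuatFrame.gadget (t : QuatFrame) : ℤ :=
  if t.1 = 1 then
    -8 * (1 + (Perm.sign t.2.1 : ℤ) * ∏ i, (t.2.2 i : ℤ)) *
      ∑ i, if t.2.1 i = i then (t.2.2 i : ℤ) else 0
  else 0

theorem QuatFrame.gadget_inv_mul (ε δ : ℤˣ) (σ τ : Perm (Fin 3)) (s u : Fin 3 → ℤˣ) :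
    QuatFrame.gadget ((ε, σ, s)⁻¹ * (δ, τ, u)) =
      if ε = δ then
        -8 * (1 + (Perm.sign σ : ℤ) * Perm.sign τ * ∏ i, ((s i : ℤ) * u i)) *
          ∑ i, if σ i = τ i then (s i : ℤ) * u i else 0
      else 0 := by
  have hfix (i : Fin 3) : σ⁻¹ (τ i) = i ↔ σ i = τ i := by
    rw [Perm.inv_eq_iff_eq, eq_comm]
  have hε : ε * δ = 1 ↔ ε = δ := by
    rw [mul_eq_one_iff_eq_inv, Int.units_inv_eq_self]
  simp only [QuatFrame.gadget, Prod.inv_mk, Prod.mk_mul_mk, hε, Perm.mul_apply, hfix,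
    Pi.mul_apply, Pi.inv_apply, Int.units_inv_eq_self, map_mul, map_inv, Units.val_mul]

theorem QuatFrame.trace_unit_mul (t t' : QuatFrame) (i : Fin 3) :
    trace (t.unit i * t'.unit i) =
      if t.1 = t'.1 ∧ t.2.1 i = t'.2.1 i then -4 * ((t.2.2 i : ℤ) * t'.2.2 i) else 0 := by
  simp only [QuatFrame.unit, Matrix.smul_mul, Matrix.mul_smul, Matrix.trace_smul,
    trace_quatUnit_mul, smul_eq_mul]
  split_ifs <;> ring

theorem QuatFrame.unit_mul_unit (t : QuatFrame) {i j : Fin 3} (hij : i ≠ j) :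
    t.unit i * t.unit j = ((t.2.2 i : ℤ) * t.2.2 j *
      ((Perm.sign t.2.1 : ℤ) * if j = i + 1 then 1 else -1)) •
        quatUnit t.1 (t.2.1 (-(i + j))) := by
  simp only [QuatFrame.unit, Matrix.smul_mul, Matrix.mul_smul, smul_smul,
    quatUnit_perm_mul _ _ _ _ hij]
  congr 1
  ring

theorem QuatFrame.trace_unit_mul_unit (t t' : QuatFrame) {i j : Fin 3} (hij : i ≠ j) :
    trace ((t.unit i * t.unit j) * (t'.unit i * t'.unit j)) =
      if t.1 = t'.1 ∧ t.2.1 (-(i + j)) = t'.2.1 (-(i + j)) then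
        -4 * ((Perm.sign t.2.1 : ℤ) * Perm.sign t'.2.1) *
          (((t.2.2 i : ℤ) * t'.2.2 i) * ((t.2.2 j : ℤ) * t'.2.2 j)) else 0 := by
  rw [t.unit_mul_unit hij, t'.unit_mul_unit hij]
  simp only [Matrix.smul_mul, Matrix.mul_smul, Matrix.trace_smul, trace_quatUnit_mul, smul_eq_mul]
  split_ifs <;> ring

theorem QuatFrame.gadgetSum_toQuadruple (t t' : QuatFrame) :
    gadgetSum t.toQuadruple t'.toQuadruple = (t⁻¹ * t').gadget := by
  have hpair (i j : Fin 3) :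
      (if i ≠ j then trace ((t.unit i * t.unit j) * (t'.unit i * t'.unit j)) else 0) =
      if i ≠ j then if t.1 = t'.1 ∧ t.2.1 (-(i + j)) = t'.2.1 (-(i + j)) then
        -4 * ((Perm.sign t.2.1 : ℤ) * Perm.sign t'.2.1) *
          (((t.2.2 i : ℤ) * t'.2.2 i) * ((t.2.2 j : ℤ) * t'.2.2 j)) else 0 else 0 := by
    split_ifs with h h' <;> simp_all [QuatFrame.trace_unit_mul_unit]
  rw [QuatFrame.toQuadruple, QuatFrame.toQuadruple,
    gadgetSum_cons_one t.unit_transpose t'.unit_transpose]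
  simp only [hpair, QuatFrame.trace_unit_mul]
  obtain ⟨ε, σ, s⟩ := t
  obtain ⟨δ, τ, u⟩ := t'
  rw [QuatFrame.gadget_inv_mul]
  by_cases hε : ε = δ
  · have hsq (i : Fin 3) : ((s i : ℤ) * u i) * (s i * u i) = 1 := by
      rw [← Units.val_mul, Int.coe_unit_mul_self]
    have h01 : -((0 : Fin 3) + 1) = 2 := rfl
    have h02 : -((0 : Fin 3) + 2) = 1 := rfl
    have h10 : -((1 : Fin 3) + 0) = 2 := rfl
    have h12 : -((1 : Fin 3) + 2) = 0 := rfl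
    have h20 : -((2 : Fin 3) + 0) = 1 := rfl
    have h21 : -((2 : Fin 3) + 1) = 0 := rfl
    simp only [hε, true_and, if_true, Fin.sum_univ_three, Fin.prod_univ_three, h01, h02, h10, h12,
      h20, h21, ne_eq, not_true_eq_false, if_false, Fin.reduceEq, not_false_eq_true]
    have h0 := hsq 0
    have h1 := hsq 1
    have h2 := hsq 2
    generalize (s 0 : ℤ) * u 0 = a at *
    generalize (s 1 : ℤ) * u 1 = b at *
    generalize (s 2 : ℤ) * u 2 = c at *
    generalize (Perm.sign σ : ℤ) * Perm.sign τ = d at *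
    have hite (P : Prop) [Decidable P] (x : ℤ) : (if P then x else 0) = x * if P then 1 else 0 := by
      split_ifs <;> simp
    simp only [hite _ (-4 * _), hite _ (-4 * _ * _), hite _ a, hite _ b, hite _ c]
    generalize (if σ 0 = τ 0 then (1 : ℤ) else 0) = x
    generalize (if σ 1 = τ 1 then (1 : ℤ) else 0) = y
    generalize (if σ 2 = τ 2 then (1 : ℤ) else 0) = z
    linear_combination 8 * d * (b * c * x * h0 + a * c * y * h1 + a * b * z * h2)
  · simp [hε]

theorem card_gadget_eq (c : ℤ) (n : ℕ) (hn : Fintype.card {t : QuatFrame // t.gadget = c} = n) :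
    Nat.card {p : Adinkra41 × Adinkra41 // gadgetSum p.1.1 p.2.1 = c} = 384 * 384 * 96 * n := by
  let F := Perm (Fin 4) × (Fin 4 → ℤˣ)
  let e : F × QuatFrame ≃ Adinkra41 := Equiv.ofBijective _ adinkraOfFrame_bijective
  have hval (a b : F × QuatFrame) : gadgetSum (e a).1 (e b).1 = (a.2⁻¹ * b.2).gadget := by
    rw [← QuatFrame.gadgetSum_toQuadruple]
    exact gadgetSum_mul_left (signedPerm_transpose_mul_self _ _)
      (signedPerm_transpose_mul_self _ _) _ _
  let f : ((F × F) × QuatFrame) × {t : QuatFrame // t.gadget = c} ≃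
      {p : Adinkra41 × Adinkra41 // gadgetSum p.1.1 p.2.1 = c} :=
    { toFun := fun q => ⟨(e (q.1.1.1, q.1.2), e (q.1.1.2, q.1.2 * q.2.1)), by
        rw [hval, inv_mul_cancel_left, q.2.2]⟩
      invFun := fun p => ((((e.symm p.1.1).1, (e.symm p.1.2).1), (e.symm p.1.1).2),
        ⟨(e.symm p.1.1).2⁻¹ * (e.symm p.1.2).2, by
          rw [← hval, e.apply_symm_apply, e.apply_symm_apply, p.2]⟩)
      left_inv := fun q => by simp
      right_inv := fun p => by simp }
  have hF : Fintype.card F = 384 := by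
    simp [F, Fintype.card_perm, Nat.factorial]
  have hT : Fintype.card QuatFrame = 96 := by
    simp [Fintype.card_perm, Nat.factorial]
  rw [← Nat.card_congr f, Nat.card_eq_fintype_card, Fintype.card_prod, Fintype.card_prod,
    Fintype.card_prod, hF, hT, hn]

theorem stmt15 :
    Nat.card {p : Adinkra41 × Adinkra41 // gadgetSum p.1.1 p.2.1 = -48} = 14155776 ∧
    Nat.card {p : Adinkra41 × Adinkra41 // gadgetSum p.1.1 p.2.1 = -16} = 84934656 ∧
    Nat.card {p : Adinkra41 × Adinkra41 // gadgetSum p.1.1 p.2.1 = 16} = 127401984 ∧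
    Nat.card {p : Adinkra41 × Adinkra41 // gadgetSum p.1.1 p.2.1 = 0} = 1132462080 := by
  exact ⟨card_gadget_eq (-48) 1 (by decide +kernel), card_gadget_eq (-16) 6 (by decide +kernel),
    card_gadget_eq 16 9 (by decide +kernel), card_gadget_eq 0 80 (by decide +kernel)⟩
end

section
/- For all quadruples A = (L_1,L_2,L_3,L_4) and A' = (L'_1,L'_2,L'_3,L'_4) encoding (4,1) valise adinkras, the symmetrized gadget SG(A,A') lies in the set {0, 16, −16, 32, −32}. -/
open Matrix

/-- The symmetrized gadget `SG(A,A') = Σ trace(L_{I₁}ᵀ·L_{J₁}·L'_{I₂}ᵀ·L'_{J₂})`,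
summed over all pairs `I₁ < J₁` and `I₂ < J₂` in `{1,2,3,4}`. -/
def SG (L L' : Fin 4 → Matrix (Fin 4) (Fin 4) ℤ) : ℤ :=
  ∑ I₁ : Fin 4, ∑ J₁ : Fin 4, ∑ I₂ : Fin 4, ∑ J₂ : Fin 4,
    if I₁ < J₁ ∧ I₂ < J₂ then
      Matrix.trace ((L I₁)ᵀ * L J₁ * (L' I₂)ᵀ * L' J₂)
    else 0

/-- The antisymmetric `4 × 4` matrix with first row `(0, a, b, c)` which is self-dual for `ε = 1`
and anti-self-dual for `ε = -1`. -/
def dualMatrix (ε : ℤ) (u : ℤ × ℤ × ℤ) : Matrix (Fin 4) (Fin 4) ℤ :=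
  !![0, u.1, u.2.1, u.2.2;
    -u.1, 0, ε * u.2.2, -(ε * u.2.1);
    -u.2.1, -(ε * u.2.2), 0, ε * u.1;
    -u.2.2, ε * u.2.1, -(ε * u.1), 0]

/-- The six signed standard basis vectors of `ℤ³`. -/
def unitVectors : Finset (ℤ × ℤ × ℤ) :=
  {(1, 0, 0), (-1, 0, 0), (0, 1, 0), (0, -1, 0), (0, 0, 1), (0, 0, -1)}

theorem mem_unitVectors_of_sq_add_sq_add_sq {a b c : ℤ} (h : a ^ 2 + b ^ 2 + c ^ 2 = 1) :
    (a, b, c) ∈ unitVectors := by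
  have ha : -1 ≤ a ∧ a ≤ 1 := by constructor <;> nlinarith [sq_nonneg b, sq_nonneg c]
  have hb : -1 ≤ b ∧ b ≤ 1 := by constructor <;> nlinarith [sq_nonneg a, sq_nonneg c]
  have hc : -1 ≤ c ∧ c ≤ 1 := by constructor <;> nlinarith [sq_nonneg a, sq_nonneg b]
  obtain ⟨ha, ha'⟩ := ha
  obtain ⟨hb, hb'⟩ := hb
  obtain ⟨hc, hc'⟩ := hc
  interval_cases a <;> interval_cases b <;> interval_cases c <;> first | omega | decide

/-- An antisymmetric orthogonal integer `4 × 4` matrix is self-dual or anti-self-dual. -/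
theorem exists_eq_dualMatrix {M : Matrix (Fin 4) (Fin 4) ℤ} (hanti : Mᵀ = -M)
    (horth : M * Mᵀ = 1) :
    ∃ ε : ℤ, (ε = 1 ∨ ε = -1) ∧ ∃ u ∈ unitVectors, M = dualMatrix ε u := by
  have skew (i j : Fin 4) : M j i = -M i j := congrFun (congrFun hanti i) j
  have diag (i : Fin 4) : M i i = 0 := by linarith [skew i i]
  have norm (i : Fin 4) : M i 0 ^ 2 + M i 1 ^ 2 + M i 2 ^ 2 + M i 3 ^ 2 = 1 := by
    have := congrFun (congrFun horth i) i
    simp [Matrix.mul_apply, Fin.sum_univ_four] at this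
    linarith
  have h0 := norm 0
  have h1 := norm 1
  have h2 := norm 2
  have h3 := norm 3
  rw [diag] at h0 h1 h2 h3
  rw [skew 0 1] at h1
  rw [skew 0 2, skew 1 2] at h2
  rw [skew 0 3, skew 1 3, skew 2 3] at h3
  have hu := mem_unitVectors_of_sq_add_sq_add_sq
    (a := M 0 1) (b := M 0 2) (c := M 0 3) (by linarith)
  have ha : M 2 3 = M 0 1 ∨ M 2 3 = -M 0 1 := sq_eq_sq_iff_eq_or_eq_neg.mp (by linarith)
  have hb : M 1 3 = M 0 2 ∨ M 1 3 = -M 0 2 := sq_eq_sq_iff_eq_or_eq_neg.mp (by linarith)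
  have hc : M 1 2 = M 0 3 ∨ M 1 2 = -M 0 3 := sq_eq_sq_iff_eq_or_eq_neg.mp (by linarith)
  have key : ∃ ε : ℤ, (ε = 1 ∨ ε = -1) ∧ M 2 3 = ε * M 0 1 ∧ M 1 3 = -(ε * M 0 2) ∧
      M 1 2 = ε * M 0 3 := by
    simp only [unitVectors, Finset.mem_insert, Finset.mem_singleton, Prod.mk.injEq] at hu
    by_cases h : M 2 3 = M 0 1 ∧ M 1 3 = -M 0 2 ∧ M 1 2 = M 0 3
    · exact ⟨1, by omega⟩
    · exact ⟨-1, by omega⟩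
  obtain ⟨ε, hε, hf, he, hd⟩ := key
  refine ⟨ε, hε, _, hu, ?_⟩
  ext i j
  fin_cases i <;> fin_cases j <;>
    simp [dualMatrix, diag, skew 0 1, skew 0 2, skew 0 3, skew 1 2, skew 1 3, skew 2 3, hd, he, hf]

/-- Anticommuting signed units have the same duality type and are orthogonal. -/
theorem eq_and_orthogonal_of_anticommute {ε δ : ℤ} (hε : ε = 1 ∨ ε = -1) (hδ : δ = 1 ∨ δ = -1)
    {u v : ℤ × ℤ × ℤ} (hu : u ∈ unitVectors) (hv : v ∈ unitVectors)
    (h : dualMatrix ε u * dualMatrix δ v + dualMatrix δ v * dualMatrix ε u = 0) :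
    ε = δ ∧ u.1 * v.1 + u.2.1 * v.2.1 + u.2.2 * v.2.2 = 0 := by
  obtain ⟨a, b, c⟩ := u
  obtain ⟨a', b', c'⟩ := v
  have entry (i j : Fin 4) := congrFun (congrFun h i) j
  have h00 := entry 0 0
  have h11 := entry 1 1
  have h22 := entry 2 2
  have h12 := entry 1 2
  have h13 := entry 1 3
  have h23 := entry 2 3
  have h01 := entry 0 1
  have h02 := entry 0 2
  have h03 := entry 0 3
  simp [dualMatrix] at h00 h11 h22 h12 h13 h23 h01 h02 h03
  simp only [unitVectors, Finset.mem_insert, Finset.mem_singleton, Prod.mk.injEq] at hu hv ⊢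
  rcases hε with rfl | rfl <;> rcases hδ with rfl | rfl <;>
    rcases hu with ⟨rfl, rfl, rfl⟩ | ⟨rfl, rfl, rfl⟩ | ⟨rfl, rfl, rfl⟩ | ⟨rfl, rfl, rfl⟩ |
      ⟨rfl, rfl, rfl⟩ | ⟨rfl, rfl, rfl⟩ <;> omega

/-- The vectors `w ∈ {0, 2, -2}³` with at least one vanishing coordinate. -/
def IsGadgetVector (w : ℤ × ℤ × ℤ) : Prop :=
  (w.1 = 0 ∨ w.1 = 2 ∨ w.1 = -2) ∧ (w.2.1 = 0 ∨ w.2.1 = 2 ∨ w.2.1 = -2) ∧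
    (w.2.2 = 0 ∨ w.2.2 = 2 ∨ w.2.2 = -2) ∧ (w.1 = 0 ∨ w.2.1 = 0 ∨ w.2.2 = 0)

instance : DecidablePred IsGadgetVector := fun w => by
  unfold IsGadgetVector
  infer_instance

/-- The vector of the sum `X + Y + Z - XY - XZ - YZ` for `X`, `Y`, `Z` of duality type `ε`
with pairwise orthogonal vectors `u`, `v`, `w`. -/
def gadgetVector (ε : ℤ) (u v w : ℤ × ℤ × ℤ) : ℤ × ℤ × ℤ :=
  (u.1 + v.1 + w.1 + ε * (u.2.1 * v.2.2 - u.2.2 * v.2.1 + (u.2.1 * w.2.2 - u.2.2 * w.2.1)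
      + (v.2.1 * w.2.2 - v.2.2 * w.2.1)),
    u.2.1 + v.2.1 + w.2.1 + ε * (u.2.2 * v.1 - u.1 * v.2.2 + (u.2.2 * w.1 - u.1 * w.2.2)
      + (v.2.2 * w.1 - v.1 * w.2.2)),
    u.2.2 + v.2.2 + w.2.2 + ε * (u.1 * v.2.1 - u.2.1 * v.1 + (u.1 * w.2.1 - u.2.1 * w.1)
      + (v.1 * w.2.1 - v.2.1 * w.1)))

theorem isGadgetVector_gadgetVector : ∀ ε ∈ ({1, -1} : Finset ℤ),
    ∀ u ∈ unitVectors, ∀ v ∈ unitVectors, ∀ w ∈ unitVectors,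
    u.1 * v.1 + u.2.1 * v.2.1 + u.2.2 * v.2.2 = 0 →
    u.1 * w.1 + u.2.1 * w.2.1 + u.2.2 * w.2.2 = 0 →
    v.1 * w.1 + v.2.1 * w.2.1 + v.2.2 * w.2.2 = 0 →
    IsGadgetVector (gadgetVector ε u v w) := by
  decide +kernel

set_option maxHeartbeats 1000000 in
theorem dualMatrix_gadgetVector {ε : ℤ} (hε : ε = 1 ∨ ε = -1) {u v w : ℤ × ℤ × ℤ}
    (huv : u.1 * v.1 + u.2.1 * v.2.1 + u.2.2 * v.2.2 = 0)
    (huw : u.1 * w.1 + u.2.1 * w.2.1 + u.2.2 * w.2.2 = 0)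
    (hvw : v.1 * w.1 + v.2.1 * w.2.1 + v.2.2 * w.2.2 = 0) :
    dualMatrix ε u + dualMatrix ε v + dualMatrix ε w - dualMatrix ε u * dualMatrix ε v
      - dualMatrix ε u * dualMatrix ε w - dualMatrix ε v * dualMatrix ε w
      = dualMatrix ε (gadgetVector ε u v w) := by
  ext i j
  rcases hε with rfl | rfl <;> fin_cases i <;> fin_cases j <;>
    simp [dualMatrix, gadgetVector] <;> linarith

/-- The sum of the products `L_Iᵀ L_J` over `I < J`. -/
def pairSum (L : Fin 4 → Matrix (Fin 4) (Fin 4) ℤ) : Matrix (Fin 4) (Fin 4) ℤ :=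
  (L 0)ᵀ * L 1 + (L 0)ᵀ * L 2 + (L 0)ᵀ * L 3 + (L 1)ᵀ * L 2 + (L 1)ᵀ * L 3 + (L 2)ᵀ * L 3

theorem SG_eq_trace_pairSum (L L' : Fin 4 → Matrix (Fin 4) (Fin 4) ℤ) :
    SG L L' = trace (pairSum L * pairSum L') := by
  simp [SG, pairSum, Fin.sum_univ_four, Matrix.mul_add, Matrix.add_mul, Matrix.mul_assoc]
  ring

theorem GardenRel.mul_transpose_self_s18 {d N : ℕ} {L : Fin N → Matrix (Fin d) (Fin d) ℤ}
    (h : GardenRel L) (I : Fin N) : L I * (L I)ᵀ = 1 := by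
  have h' := (h I I).1
  rw [if_pos rfl, ← two_smul ℤ] at h'
  exact smul_right_injective _ two_ne_zero h'

theorem GardenRel.transpose_mul_add {d N : ℕ} {L : Fin N → Matrix (Fin d) (Fin d) ℤ}
    (h : GardenRel L) {I J : Fin N} (hIJ : I ≠ J) : (L I)ᵀ * L J + (L J)ᵀ * L I = 0 := by
  simpa [hIJ] using (h I J).2

theorem GardenRel.transpose_mul_transpose_mul {d N : ℕ}
    {L : Fin N → Matrix (Fin d) (Fin d) ℤ} (h : GardenRel L) {I J : Fin N} (hIJ : I ≠ J)
    (K : Fin N) : (L I)ᵀ * L J * ((L I)ᵀ * L K) = -((L J)ᵀ * L K) := by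
  rw [eq_neg_of_add_eq_zero_left (h.transpose_mul_add hIJ), neg_mul, Matrix.mul_assoc,
    ← Matrix.mul_assoc (L I), h.mul_transpose_self_s18, Matrix.one_mul]

theorem GardenRel.exists_transpose_mul_eq_dualMatrix {N : ℕ}
    {L : Fin N → Matrix (Fin 4) (Fin 4) ℤ} (h : GardenRel L) {I J : Fin N} (hIJ : I ≠ J) :
    ∃ ε : ℤ, (ε = 1 ∨ ε = -1) ∧ ∃ u ∈ unitVectors, (L I)ᵀ * L J = dualMatrix ε u := by
  have hanti : ((L I)ᵀ * L J)ᵀ = -((L I)ᵀ * L J) := by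
    rw [transpose_mul, transpose_transpose]
    exact eq_neg_of_add_eq_zero_left (h.transpose_mul_add hIJ.symm)
  refine exists_eq_dualMatrix hanti ?_
  rw [hanti, mul_neg, h.transpose_mul_transpose_mul hIJ, neg_neg]
  exact mul_eq_one_comm.mp (h.mul_transpose_self_s18 J)

theorem GardenRel.anticommute {d N : ℕ} {L : Fin N → Matrix (Fin d) (Fin d) ℤ}
    (h : GardenRel L) {I J K : Fin N} (hIJ : I ≠ J) (hIK : I ≠ K) (hJK : J ≠ K) :
    (L I)ᵀ * L J * ((L I)ᵀ * L K) + (L I)ᵀ * L K * ((L I)ᵀ * L J) = 0 := by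
  rw [h.transpose_mul_transpose_mul hIJ, h.transpose_mul_transpose_mul hIK, ← neg_add,
    h.transpose_mul_add hJK, neg_zero]

theorem GardenRel.exists_pairSum_eq {L : Fin 4 → Matrix (Fin 4) (Fin 4) ℤ} (h : GardenRel L) :
    ∃ ε : ℤ, (ε = 1 ∨ ε = -1) ∧ ∃ w, IsGadgetVector w ∧ pairSum L = dualMatrix ε w := by
  have h01 : (0 : Fin 4) ≠ 1 := by decide
  have h02 : (0 : Fin 4) ≠ 2 := by decide
  have h03 : (0 : Fin 4) ≠ 3 := by decide
  have hXY := h.anticommute h01 h02 (by decide)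
  have hXZ := h.anticommute h01 h03 (by decide)
  have hYZ := h.anticommute h02 h03 (by decide)
  have hsum : pairSum L = (L 0)ᵀ * L 1 + (L 0)ᵀ * L 2 + (L 0)ᵀ * L 3
      - (L 0)ᵀ * L 1 * ((L 0)ᵀ * L 2) - (L 0)ᵀ * L 1 * ((L 0)ᵀ * L 3)
      - (L 0)ᵀ * L 2 * ((L 0)ᵀ * L 3) := by
    rw [h.transpose_mul_transpose_mul h01, h.transpose_mul_transpose_mul h01,
      h.transpose_mul_transpose_mul h02, pairSum]
    abel
  obtain ⟨ε, hε, u, hu, hX⟩ := h.exists_transpose_mul_eq_dualMatrix h01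
  obtain ⟨δ, hδ, v, hv, hY⟩ := h.exists_transpose_mul_eq_dualMatrix h02
  obtain ⟨γ, hγ, w, hw, hZ⟩ := h.exists_transpose_mul_eq_dualMatrix h03
  rw [hX, hY, hZ] at hsum
  rw [hX, hY] at hXY
  rw [hX, hZ] at hXZ
  rw [hY, hZ] at hYZ
  obtain ⟨rfl, huv⟩ := eq_and_orthogonal_of_anticommute hε hδ hu hv hXY
  obtain ⟨rfl, huw⟩ := eq_and_orthogonal_of_anticommute hε hγ hu hw hXZ
  obtain ⟨-, hvw⟩ := eq_and_orthogonal_of_anticommute hε hε hv hw hYZ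
  exact ⟨ε, hε, gadgetVector ε u v w,
    isGadgetVector_gadgetVector ε (by simpa using hε) u hu v hv w hw huv huw hvw,
    hsum.trans (dualMatrix_gadgetVector hε huv huw hvw)⟩

theorem trace_dualMatrix_mul (ε δ : ℤ) (u v : ℤ × ℤ × ℤ) :
    trace (dualMatrix ε u * dualMatrix δ v) =
      -2 * (1 + ε * δ) * (u.1 * v.1 + u.2.1 * v.2.1 + u.2.2 * v.2.2) := by
  simp [dualMatrix, trace, Fin.sum_univ_four]
  ring

theorem IsGadgetVector.inner_mem {u v : ℤ × ℤ × ℤ} (hu : IsGadgetVector u)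
    (hv : IsGadgetVector v) :
    u.1 * v.1 + u.2.1 * v.2.1 + u.2.2 * v.2.2 ∈ ({0, 4, -4, 8, -8} : Set ℤ) := by
  obtain ⟨a, b, c⟩ := u
  obtain ⟨a', b', c'⟩ := v
  obtain ⟨ha, hb, hc, h0⟩ := hu
  obtain ⟨ha', hb', hc', -⟩ := hv
  simp only [Set.mem_insert_iff, Set.mem_singleton_iff] at *
  have product {x y : ℤ} (hx : x = 0 ∨ x = 2 ∨ x = -2) (hy : y = 0 ∨ y = 2 ∨ y = -2) :
      x * y = 0 ∨ x * y = 4 ∨ x * y = -4 := by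
    rcases hx with rfl | rfl | rfl <;> omega
  have haa := product ha ha'
  have hbb := product hb hb'
  have hcc := product hc hc'
  rcases h0 with rfl | rfl | rfl <;> simp only [zero_mul] at * <;> omega

theorem stmt18 (L L' : Fin 4 → Matrix (Fin 4) (Fin 4) ℤ)
    (hL : IsAdinkra L) (hL' : IsAdinkra L') :
    SG L L' ∈ ({0, 16, -16, 32, -32} : Set ℤ) := by
  obtain ⟨ε, hε, u, hu, hLu⟩ := hL.2.exists_pairSum_eq
  obtain ⟨δ, hδ, v, hv, hLv⟩ := hL'.2.exists_pairSum_eq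
  rw [SG_eq_trace_pairSum, hLu, hLv, trace_dualMatrix_mul]
  have key := hu.inner_mem hv
  simp only [Set.mem_insert_iff, Set.mem_singleton_iff] at key ⊢
  rcases hε with rfl | rfl <;> rcases hδ with rfl | rfl <;> omega
end
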